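/- For the Dedekind zeta function ζ_K of a number field K, the residue at s = 1 equals (2^{r1}·(2π)^{r2}·h·R)/(w·√|d|), where h is the class number, R the regulator, w the number of roots of unity in K, r1 and r2 the numbers of real and complex places, and d the discriminant (analytic class number formula). -/

import Mathlib

open NumberField NumberField.InfinitePlace NumberField.Units Filter Topology

/-!
Grouping the ideals by norm turns the sum over nonzero ideals into the Dirichlet series
`∑ aₙ n^{-s}`, where `aₙ` is the (finite) number of ideals of norm `n`; this is Mathlib's
`dedekindZeta`. Its residue at `1` is `NumberField.tendsto_sub_one_mul_dedekindZeta_nhdsGT`, which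
rests on the count of ideals of norm at most `x` being asymptotic to the residue times `x`.
The regrouping is `tsum_ideal_eq_tsum_nat`.
-/

/-- All terms are nonnegative, so the regrouping is done in `ℝ≥0∞`, where no summability is needed,
and then transported to `ℝ` termwise. The term `n = 0` is set to zero, as in `LSeries.term`: the
only ideal of norm `0` is `⊥`, which is excluded on the left. -/
theorem tsum_ideal_eq_tsum_nat (K : Type*) [Field K] [NumberField K] (s : ℝ) :
    ∑' I : {I : Ideal (𝓞 K) // I ≠ ⊥}, (Ideal.absNorm (I : Ideal (𝓞 K)) : ℝ) ^ (-s) =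
      ∑' n : ℕ, if n = 0 then (0 : ℝ) else
        (Nat.card {I : Ideal (𝓞 K) // Ideal.absNorm I = n} : ℝ) * (n : ℝ) ^ (-s) := by
  have key : ∑' I : {I : Ideal (𝓞 K) // I ≠ ⊥},
      ENNReal.ofReal ((Ideal.absNorm (I : Ideal (𝓞 K)) : ℝ) ^ (-s)) =
      ∑' n : ℕ, ENNReal.ofReal (if n = 0 then (0 : ℝ) else
        (Nat.card {I : Ideal (𝓞 K) // Ideal.absNorm I = n} : ℝ) * (n : ℝ) ^ (-s)) := by
    rw [← (Equiv.sigmaFiberEquiv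
      (fun I : {I : Ideal (𝓞 K) // I ≠ ⊥} ↦ Ideal.absNorm (I : Ideal (𝓞 K)))).tsum_eq,
      ENNReal.tsum_sigma']
    congr 1 with n
    have hterm : ∀ x : {I : {I : Ideal (𝓞 K) // I ≠ ⊥} // Ideal.absNorm (I : Ideal (𝓞 K)) = n},
        ENNReal.ofReal ((Ideal.absNorm (Equiv.sigmaFiberEquiv
          (fun I : {I : Ideal (𝓞 K) // I ≠ ⊥} ↦ Ideal.absNorm (I : Ideal (𝓞 K)))
            ⟨n, x⟩ : Ideal (𝓞 K)) : ℝ) ^ (-s)) = ENNReal.ofReal ((n : ℝ) ^ (-s)) := by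
      rintro ⟨x, hx⟩
      simp [Equiv.sigmaFiberEquiv, hx]
    rw [tsum_congr hterm, ENNReal.tsum_const]
    split_ifs with hn
    · have : IsEmpty
          {I : {I : Ideal (𝓞 K) // I ≠ ⊥} // Ideal.absNorm (I : Ideal (𝓞 K)) = n} :=
        ⟨fun x ↦ x.1.2 (Ideal.absNorm_eq_zero_iff.mp (x.2.trans hn))⟩
      simp [(ENat.card_eq_zero_iff_empty _).mpr this]
    · let e : {I : {I : Ideal (𝓞 K) // I ≠ ⊥} // Ideal.absNorm (I : Ideal (𝓞 K)) = n} ≃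
          {I : Ideal (𝓞 K) // Ideal.absNorm I = n} :=
        Equiv.subtypeSubtypeEquivSubtype (q := fun I ↦ Ideal.absNorm I = n) fun {I} hI h ↦ hn (by
          rw [← hI, h, Ideal.absNorm_bot])
      have : Finite {I : Ideal (𝓞 K) // Ideal.absNorm I = n} :=
        Ideal.finite_setOfPred_absNorm_eq n
      rw [ENat.card_congr e, ENat.card_eq_coe_natCard,
        ENNReal.ofReal_mul (Nat.cast_nonneg _), ENNReal.ofReal_natCast]
      rfl
  have h := congrArg ENNReal.toReal key
  rw [ENNReal.tsum_toReal_eq fun _ ↦ ENNReal.ofReal_ne_top,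
    ENNReal.tsum_toReal_eq fun _ ↦ ENNReal.ofReal_ne_top] at h
  convert h using 3 with I n
  · exact (ENNReal.toReal_ofReal (by positivity)).symm
  · exact (ENNReal.toReal_ofReal (by split_ifs <;> positivity)).symm

theorem dedekindZeta_eq_tsum_ideal (K : Type*) [Field K] [NumberField K] (s : ℝ) :
    dedekindZeta K s = ((∑' I : {I : Ideal (𝓞 K) // I ≠ ⊥},
      (Ideal.absNorm (I : Ideal (𝓞 K)) : ℝ) ^ (-s) : ℝ) : ℂ) := by
  rw [tsum_ideal_eq_tsum_nat, Complex.ofReal_tsum, dedekindZeta, LSeries]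
  refine tsum_congr fun n ↦ ?_
  rw [LSeries.term_def]
  split_ifs with hn
  · simp
  · rw [Complex.ofReal_mul, Complex.ofReal_cpow (Nat.cast_nonneg n), div_eq_mul_inv,
      Complex.ofReal_neg, Complex.cpow_neg]
    simp

/-- **Analytic class number formula**: the residue at `s = 1` of the Dedekind zeta function
`ζ_K(s) = ∑_a Nm(a)^{-s}` (sum over nonzero integral ideals) of a number field `K` equals
`2^{r₁}·(2π)^{r₂}·h·R / (w·√|d|)`, where `h` is the class number, `R` the regulator, `w` the
number of roots of unity in `K`, `r₁, r₂` the numbers of real and complex places, and `d`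
the discriminant. -/
theorem analytic_class_number_formula (K : Type*) [Field K] [NumberField K] :
    Tendsto (fun s : ℝ => (s - 1) *
        ∑' I : {I : Ideal (𝓞 K) // I ≠ ⊥}, (Ideal.absNorm (I : Ideal (𝓞 K)) : ℝ) ^ (-s))
      (𝓝[>] 1)
      (𝓝 ((2 : ℝ) ^ (nrRealPlaces K) * (2 * Real.pi) ^ (nrComplexPlaces K) *
        (classNumber K) * regulator K /
          ((Nat.card (torsion K)) * Real.sqrt |(discr K : ℝ)|))) := by
  have hres : (2 : ℝ) ^ (nrRealPlaces K) * (2 * Real.pi) ^ (nrComplexPlaces K) *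
        (classNumber K) * regulator K /
          ((Nat.card (torsion K)) * Real.sqrt |(discr K : ℝ)|) = dedekindZeta_residue K := by
    rw [dedekindZeta_residue_def, torsionOrder, mul_right_comm]
  rw [hres]
  refine (Complex.continuous_re.continuousAt.tendsto.comp
    (tendsto_sub_one_mul_dedekindZeta_nhdsGT K)).congr fun s ↦ ?_
  rw [Function.comp_apply, dedekindZeta_eq_tsum_ideal]
  norm_cast
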